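/- Let δe, δb, δr, f be relations on a type α and (ms₁, ms₂) the least pair of subsets of α closed under rules (R1)–(R6). Let δ''p be a relation on α with δ''p ∩ δe = ∅ and f ∩ δe = ∅. Let s₀,…,s_n be a p''[]₂δe[]f prefix with s_n ∈ ms₂, and suppose either n = 0 or (s_{n−1}, s_n) ∉ δe. Then s_n ∈ ms₁, or there exists u with (s_n, u) ∈ δe such that s₀,…,s_n,u is a p''[]₂δe[]f prefix and either (s_n, u) ∈ δb or u ∈ ms₁. -/

import Mathlib

variable {α : Type*}

/-- The closure rules (R1)–(R6) computed by the failsafe fault-tolerance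
addition algorithm, for a pair of sets `(ms₁, ms₂)`. -/
def ClosedMS (δe δb δr f : Set (α × α)) (ms₁ ms₂ : Set α) : Prop :=
  -- (R1)
  (∀ s t, (s, t) ∈ f → (s, t) ∈ δb → s ∈ ms₁) ∧
  -- (R2)
  (ms₁ ⊆ ms₂) ∧
  -- (R3)
  (∀ s t, (s, t) ∈ δe → (s, t) ∈ δb → s ∈ ms₂) ∧
  -- (R4)
  (∀ s t, (s, t) ∈ f → t ∈ ms₂ → s ∈ ms₁) ∧
  -- (R5)
  (∀ s, (∃ t, ((s, t) ∈ δe ∧ t ∈ ms₁) ∨ ((s, t) ∈ δe ∧ (s, t) ∈ δb)) →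
    (∀ u, (s, u) ∈ δb ∨ (s, u) ∈ δr ∨ u ∈ ms₂) → s ∈ ms₁) ∧
  -- (R6)
  (∀ s t, (s, t) ∈ δe → t ∈ ms₁ → s ∈ ms₂)

/-- `(ms₁, ms₂)` is the least pair of sets closed under rules (R1)–(R6). -/
def LeastMS (δe δb δr f : Set (α × α)) (ms₁ ms₂ : Set α) : Prop :=
  ClosedMS δe δb δr f ms₁ ms₂ ∧
  ∀ ms₁' ms₂', ClosedMS δe δb δr f ms₁' ms₂' → ms₁ ⊆ ms₁' ∧ ms₂ ⊆ ms₂'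

/-- `PrefixF δp δe f σ n`: the finite sequence `σ 0, …, σ n` is a `p[]₂δe[]f` prefix. -/
def PrefixF (δp δe f : Set (α × α)) (σ : ℕ → α) (n : ℕ) : Prop :=
  (∀ i < n, (σ i, σ (i + 1)) ∈ δp ∪ δe ∪ f) ∧
  (∀ i, i + 2 ≤ n → (σ i, σ (i + 1)) ∈ δe → (∃ t, (σ (i + 1), t) ∈ δp) →
    (σ (i + 1), σ (i + 2)) ∈ δp ∪ f)

/-- The states from which a single environment transition is bad or enters `X`. For `X = ms₁` this
is the common content of rules (R3) and (R6) and of the first premise of (R5). -/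
def envThreat (δe δb : Set (α × α)) (X : Set α) : Set α :=
  {s | ∃ u, (s, u) ∈ δe ∧ ((s, u) ∈ δb ∨ u ∈ X)}

section MS

variable {δe δb δr f : Set (α × α)} {ms₁ ms₂ : Set α}

theorem ClosedMS.union_envThreat_subset (h : ClosedMS δe δb δr f ms₁ ms₂) :
    ms₁ ∪ envThreat δe δb ms₁ ⊆ ms₂ := by
  obtain ⟨-, r2, r3, -, -, r6⟩ := h
  rintro s (hs | ⟨u, hsu, hbad | hu⟩)
  · exact r2 hs
  · exact r3 s u hsu hbad
  · exact r6 s u hsu hu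

-- (R4) and (R5) mention `ms₂` only in a premise, so they survive shrinking it.
theorem ClosedMS.union_envThreat (h : ClosedMS δe δb δr f ms₁ ms₂) :
    ClosedMS δe δb δr f ms₁ (ms₁ ∪ envThreat δe δb ms₁) := by
  have hsub := h.union_envThreat_subset
  obtain ⟨r1, -, -, r4, r5, -⟩ := h
  refine ⟨r1, Set.subset_union_left, ?_, ?_, ?_, ?_⟩
  · exact fun s t hst hbad => Or.inr ⟨t, hst, Or.inl hbad⟩
  · exact fun s t hst ht => r4 s t hst (hsub ht)
  · exact fun s hs hall => r5 s hs fun u => (hall u).imp_right (Or.imp_right (@hsub u))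
  · exact fun s t hst ht => Or.inr ⟨t, hst, Or.inr ht⟩

theorem LeastMS.right_eq_union_envThreat (h : LeastMS δe δb δr f ms₁ ms₂) :
    ms₂ = ms₁ ∪ envThreat δe δb ms₁ :=
  (h.2 _ _ h.1.union_envThreat).2.antisymm h.1.union_envThreat_subset

end MS

section Prefix

variable {δp δe f : Set (α × α)} {σ τ : ℕ → α} {n : ℕ}

theorem PrefixF.congr (h : PrefixF δp δe f σ n) (hτ : ∀ i ≤ n, τ i = σ i) :
    PrefixF δp δe f τ n := by
  constructor
  · intro i hi
    rw [hτ i (by lia), hτ (i + 1) (by lia)]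
    exact h.1 i hi
  · intro i hi
    rw [hτ i (by lia), hτ (i + 1) (by lia), hτ (i + 2) hi]
    exact h.2 i hi

theorem PrefixF.succ_of_last_not_mem_env (h : PrefixF δp δe f σ n)
    (hlast : n = 0 ∨ (σ (n - 1), σ n) ∉ δe) (hstep : (σ n, σ (n + 1)) ∈ δp ∪ δe ∪ f) :
    PrefixF δp δe f σ (n + 1) := by
  constructor
  · intro i hi
    obtain hi | rfl := Nat.lt_succ_iff_lt_or_eq.mp hi
    · exact h.1 i hi
    · exact hstep
  · intro i hi henv
    obtain hi | rfl : i + 2 ≤ n ∨ n = i + 1 := by lia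
    · exact h.2 i hi henv
    · exact absurd henv (hlast.resolve_left i.succ_ne_zero)

theorem PrefixF.exists_extension (h : PrefixF δp δe f σ n)
    (hlast : n = 0 ∨ (σ (n - 1), σ n) ∉ δe) {u : α} (hu : (σ n, u) ∈ δp ∪ δe ∪ f) :
    ∃ τ : ℕ → α, (∀ i ≤ n, τ i = σ i) ∧ τ (n + 1) = u ∧ PrefixF δp δe f τ (n + 1) := by
  let τ := Function.update σ (n + 1) u
  have hagree : ∀ i ≤ n, τ i = σ i := fun i hi => Function.update_of_ne (by lia) u σ
  have hnext : τ (n + 1) = u := Function.update_self (n + 1) u σ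
  refine ⟨τ, hagree, hnext, (h.congr hagree).succ_of_last_not_mem_env ?_ ?_⟩
  · rwa [hagree (n - 1) (n.sub_le 1), hagree n le_rfl]
  · rwa [hagree n le_rfl, hnext]

end Prefix

theorem stmt12_general (δe δb δr f δ''p : Set (α × α)) (ms₁ ms₂ : Set α)
    (hms : LeastMS δe δb δr f ms₁ ms₂)
    (σ : ℕ → α) (n : ℕ) (hpre : PrefixF δ''p δe f σ n)
    (hn : σ n ∈ ms₂)
    (hlast : n = 0 ∨ (σ (n - 1), σ n) ∉ δe) :
    σ n ∈ ms₁ ∨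
    ∃ u, (σ n, u) ∈ δe ∧
      (∃ σ' : ℕ → α, (∀ i ≤ n, σ' i = σ i) ∧ σ' (n + 1) = u ∧
        PrefixF δ''p δe f σ' (n + 1)) ∧
      ((σ n, u) ∈ δb ∨ u ∈ ms₁) := by
  have hcases : σ n ∈ ms₁ ∪ envThreat δe δb ms₁ := hms.right_eq_union_envThreat ▸ hn
  obtain hmem | ⟨u, henv, hthreat⟩ := hcases
  · exact Or.inl hmem
  · exact Or.inr ⟨u, henv, hpre.exists_extension hlast (Or.inl (Or.inr henv)), hthreat⟩

theorem stmt12 (δe δb δr f δ''p : Set (α × α)) (ms₁ ms₂ : Set α)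
    (hms : LeastMS δe δb δr f ms₁ ms₂)
    (hpe : δ''p ∩ δe = ∅) (hfe : f ∩ δe = ∅)
    (σ : ℕ → α) (n : ℕ) (hpre : PrefixF δ''p δe f σ n)
    (hn : σ n ∈ ms₂)
    (hlast : n = 0 ∨ (σ (n - 1), σ n) ∉ δe) :
    σ n ∈ ms₁ ∨
    ∃ u, (σ n, u) ∈ δe ∧
      (∃ σ' : ℕ → α, (∀ i ≤ n, σ' i = σ i) ∧ σ' (n + 1) = u ∧
        PrefixF δ''p δe f σ' (n + 1)) ∧
      ((σ n, u) ∈ δb ∨ u ∈ ms₁) :=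
  stmt12_general δe δb δr f δ''p ms₁ ms₂ hms σ n hpre hn hlast
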